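/- For any game G, any subset X of vertices, any valuation val ∈ {MP, supΣ^X, infΣ^X}, and any vertex v, it holds that inf_σ sup_{π ⊨ σ, π from v} val(π) = sup_τ inf_{π ⊨ τ, π from v} val(π), where σ ranges over positional Min-strategies, τ over positional Max-strategies, and π over infinite paths starting from v (positional determinacy for mean-payoff and energy-type valuations). -/

import Mathlib

/-!
Basic definitions for mean-payoff games: games, infinite paths, positional
strategies, the valuations MP, supΣ^X and infΣ^X, values of vertices,
zones N, P, ZN, ZP (also relative to a sub-arena), reduced games,
potentials and potential reductions, traps.
-/

/-- A game: a sinkless directed graph with integer weights, whose vertices are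
partitioned into Min-vertices (`IsMin`) and Max-vertices (`¬ IsMin`). -/
structure MPGame (V : Type*) where
  E : V → V → Prop
  w : V → V → ℤ
  IsMin : V → Prop
  sinkless : ∀ v, ∃ v', E v v'

namespace MPGame

variable {V : Type*}

/-- An infinite path in a game. -/
structure Path (G : MPGame V) where
  vert : ℕ → V
  adj : ∀ i, G.E (vert i) (vert (i + 1))

/-- The sum of the weights of the first `k` edges of a path. -/
def Path.wsum {G : MPGame V} (π : G.Path) (k : ℕ) : ℤ :=
  ∑ i ∈ Finset.range k, G.w (π.vert i) (π.vert (i + 1))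

/-- The tail of a path (drop the first vertex). -/
def Path.tail {G : MPGame V} (π : G.Path) : G.Path :=
  ⟨fun i => π.vert (i + 1), fun i => π.adj (i + 1)⟩

/-- A positional strategy `σ : V → V` is legal if it always follows an edge. -/
def Legal (G : MPGame V) (σ : V → V) : Prop := ∀ v, G.E v (σ v)

/-- Consistency of a path with a positional Min-strategy. -/
def Path.ConsMin {G : MPGame V} (π : G.Path) (σ : V → V) : Prop :=
  ∀ i, G.IsMin (π.vert i) → π.vert (i + 1) = σ (π.vert i)

/-- Consistency of a path with a positional Max-strategy. -/
def Path.ConsMax {G : MPGame V} (π : G.Path) (τ : V → V) : Prop :=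
  ∀ i, ¬ G.IsMin (π.vert i) → π.vert (i + 1) = τ (π.vert i)

/-- The mean-payoff valuation `MP(π) = limsup_k (1/k) ∑_{i<k} w_i`. -/
noncomputable def MP {G : MPGame V} (π : G.Path) : EReal :=
  Filter.limsup (fun k => (((π.wsum k : ℝ) / (k : ℝ)) : EReal)) Filter.atTop

/-- `supΣ^X(π) = sup_{k ≤ n_X} ∑_{i<k} w_i`, where `n_X` is the first hitting
time of `X` (all `k` if `X` is never hit). -/
noncomputable def supSigma {G : MPGame V} (X : Set V) (π : G.Path) : EReal :=
  ⨆ k : {k : ℕ // ∀ i < k, π.vert i ∉ X}, ((π.wsum k.1 : ℝ) : EReal)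

/-- `infΣ^X(π) = inf_{k ≤ n_X} ∑_{i<k} w_i`. -/
noncomputable def infSigma {G : MPGame V} (X : Set V) (π : G.Path) : EReal :=
  ⨅ k : {k : ℕ // ∀ i < k, π.vert i ∉ X}, ((π.wsum k.1 : ℝ) : EReal)

/-- `inf_σ sup_{π ⊨ σ, π from v} val(π)`, over legal positional Min-strategies. -/
noncomputable def minVal (G : MPGame V) (val : G.Path → EReal) (v : V) : EReal :=
  ⨅ σ : {σ : V → V // G.Legal σ},
    ⨆ π : {π : G.Path // π.vert 0 = v ∧ π.ConsMin σ.1}, val π.1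

/-- `sup_τ inf_{π ⊨ τ, π from v} val(π)`, over legal positional Max-strategies. -/
noncomputable def maxVal (G : MPGame V) (val : G.Path → EReal) (v : V) : EReal :=
  ⨆ τ : {τ : V → V // G.Legal τ},
    ⨅ π : {π : G.Path // π.vert 0 = v ∧ π.ConsMax τ.1}, val π.1

/-- The MP-value of a vertex. -/
noncomputable def MPval (G : MPGame V) (v : V) : EReal := G.minVal MP v

/-- The `supΣ^X`-value of a vertex. -/
noncomputable def supSigmaVal (G : MPGame V) (X : Set V) (v : V) : EReal :=
  G.minVal (supSigma X) v

/-- The `infΣ^X`-value of a vertex. -/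
noncomputable def infSigmaVal (G : MPGame V) (X : Set V) (v : V) : EReal :=
  G.minVal (infSigma X) v

/-- `G` has no cycle of total weight zero: no path repeats a vertex with the
same partial sum of weights. -/
def NoZeroCycle (G : MPGame V) : Prop :=
  ∀ (π : G.Path) (i j : ℕ), i < j → π.vert i = π.vert j → π.wsum i ≠ π.wsum j

/-- The zone `N` of the subgame of `G` induced on `D`: vertices whose
immediately optimal edges (within `D`) have weight `< 0`. -/
def NsetOn (G : MPGame V) (D : Set V) : Set V :=
  {v | v ∈ D ∧ ((G.IsMin v ∧ ∃ v' ∈ D, G.E v v' ∧ G.w v v' < 0) ∨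
      (¬ G.IsMin v ∧ ∀ v' ∈ D, G.E v v' → G.w v v' < 0))}

/-- The zone `P` of the subgame of `G` induced on `D`. -/
def PsetOn (G : MPGame V) (D : Set V) : Set V :=
  {v | v ∈ D ∧ ((¬ G.IsMin v ∧ ∃ v' ∈ D, G.E v v' ∧ 0 < G.w v v') ∨
      (G.IsMin v ∧ ∀ v' ∈ D, G.E v v' → 0 < G.w v v'))}

/-- The zone `N` of `G`. -/
def Nset (G : MPGame V) : Set V := G.NsetOn Set.univ

/-- The zone `P` of `G`. -/
def Pset (G : MPGame V) : Set V := G.PsetOn Set.univ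

/-- The zone `ZN` of the subgame of `G` induced on `D`: vertices from which
Min can force that an edge of weight `< 0` is visited before any edge of
weight `> 0` (staying within `D`). -/
inductive ZNr (G : MPGame V) (D : Set V) : V → Prop
  | minNeg (v v' : V) : v ∈ D → G.IsMin v → v' ∈ D → G.E v v' → G.w v v' < 0 →
      ZNr G D v
  | minZero (v v' : V) : v ∈ D → G.IsMin v → v' ∈ D → G.E v v' → G.w v v' = 0 →
      ZNr G D v' → ZNr G D v
  | max (v : V) : v ∈ D → ¬ G.IsMin v →
      (∀ v' ∈ D, G.E v v' → G.w v v' ≤ 0) →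
      (∀ v', v' ∈ D → G.E v v' → G.w v v' = 0 → ZNr G D v') →
      ZNr G D v

/-- The zone `ZP` of the subgame of `G` induced on `D`. -/
inductive ZPr (G : MPGame V) (D : Set V) : V → Prop
  | maxPos (v v' : V) : v ∈ D → ¬ G.IsMin v → v' ∈ D → G.E v v' → 0 < G.w v v' →
      ZPr G D v
  | maxZero (v v' : V) : v ∈ D → ¬ G.IsMin v → v' ∈ D → G.E v v' → G.w v v' = 0 →
      ZPr G D v' → ZPr G D v
  | min (v : V) : v ∈ D → G.IsMin v →
      (∀ v' ∈ D, G.E v v' → 0 ≤ G.w v v') →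
      (∀ v', v' ∈ D → G.E v v' → G.w v v' = 0 → ZPr G D v') →
      ZPr G D v

/-- The zone `ZN` of `G`. -/
def ZN (G : MPGame V) : V → Prop := G.ZNr Set.univ

/-- The zone `ZP` of `G`. -/
def ZP (G : MPGame V) : V → Prop := G.ZPr Set.univ

/-- The subgame of `G` induced on `D` is reduced: from every vertex of `ZN`,
Min can force that the first edge visited has weight `≤ 0` and leads into
`ZN`, and symmetrically for `ZP` and Max. -/
def ReducedOn (G : MPGame V) (D : Set V) : Prop :=
  (∀ v, G.ZNr D v →
     (G.IsMin v → ∃ v' ∈ D, G.E v v' ∧ G.w v v' ≤ 0 ∧ G.ZNr D v') ∧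
     (¬ G.IsMin v → ∀ v' ∈ D, G.E v v' → G.w v v' ≤ 0 ∧ G.ZNr D v')) ∧
  (∀ v, G.ZPr D v →
     (¬ G.IsMin v → ∃ v' ∈ D, G.E v v' ∧ 0 ≤ G.w v v' ∧ G.ZPr D v') ∧
     (G.IsMin v → ∀ v' ∈ D, G.E v v' → 0 ≤ G.w v v' ∧ G.ZPr D v'))

/-- `G` is reduced. -/
def Reduced (G : MPGame V) : Prop := G.ReducedOn Set.univ

/-- The subgame of `G` induced on `D` is positively reduced: `ZN = ∅`. -/
def PosReducedOn (G : MPGame V) (D : Set V) : Prop := ∀ v, ¬ G.ZNr D v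

/-- `A` is a trap for Min: a sinkless subgraph from which Min cannot escape. -/
def TrapForMin (G : MPGame V) (A : Set V) : Prop :=
  (∀ v ∈ A, ∃ v' ∈ A, G.E v v') ∧
  ∀ v ∈ A, G.IsMin v → ∀ v', G.E v v' → v' ∈ A

/-- `A` is a trap for Max: a sinkless subgraph from which Max cannot escape. -/
def TrapForMax (G : MPGame V) (A : Set V) : Prop :=
  (∀ v ∈ A, ∃ v' ∈ A, G.E v v') ∧
  ∀ v ∈ A, ¬ G.IsMin v → ∀ v', G.E v v' → v' ∈ A

/-- The potential reduction of `G` by the potential `φ`. -/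
def pot (G : MPGame V) (φ : V → ℤ) : MPGame V where
  E := G.E
  w := fun v v' => G.w v v' + φ v' - φ v
  IsMin := G.IsMin
  sinkless := G.sinkless

end MPGame

/-!
Let `f N v` be the value of the `supΣ^X`-game truncated after `N` steps, computed by value
iteration. Along optimal edges `f N` acts as a potential, which yields one positional strategy for
each player. For Min, some edge is optimal at `v` for infinitely many stages `N`; always taking such
an edge keeps every partial sum from `v` at most `⨆ N, f N v`. For Max, fix `N` and play the edge
that is optimal at the first stage reaching the value `f N v`: as long as `f N` is positive, the
potential-adjusted partial sum grows or that stage drops, so some partial sum reaches `f N v`.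
Hence both values of the `supΣ^X`-game are `⨆ N, f N v`.

Exchanging the players and negating the weights turns `infΣ^X` into `supΣ^X`. For the mean payoff,
compare with a rational `t` lying strictly between the two values: after subtracting `t` from all
weights, Max can force `supΣ^∅ = ⊤`, hence `MP ≥ t`, or Min can keep `supΣ^∅ < ⊤`, hence `MP ≤ t`.
-/

section Sequences

open Filter Set

theorem not_bddAbove_range_of_lt_or_rank_lt {α : Type*} [Preorder α] [WellFoundedLT α]
    {a : ℕ → ℤ} {r : ℕ → α} (ha : Monotone a) (h : ∀ k, a k < a (k + 1) ∨ r (k + 1) < r k) :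
    ¬ BddAbove (range a) := by
  rintro ⟨B, hB⟩
  obtain ⟨_, ⟨K, rfl⟩, hK⟩ := Int.exists_greatest_of_bdd (P := (· ∈ range a))
    ⟨B, fun _ hz => hB hz⟩ ⟨a 0, 0, rfl⟩
  have hrank (n : ℕ) : r (K + (n + 1)) < r (K + n) :=
    (h (K + n)).resolve_left
      ((hK _ (mem_range_self _)).trans (ha (Nat.le_add_right K n))).not_gt
  exact not_strictAnti_of_wellFoundedLT (fun n => r (K + n)) (strictAnti_nat_of_succ_lt hrank)

theorem limsup_div_natCast_le_of_bddAbove {a : ℕ → ℝ} {t : ℝ}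
    (h : BddAbove (range fun k : ℕ => a k - t * k)) :
    limsup (fun k : ℕ => (a k : EReal) / ((k : ℝ) : EReal)) atTop ≤ (t : EReal) := by
  obtain ⟨B, hB⟩ := h
  have hlim : Tendsto (fun k : ℕ => ((t + B / k : ℝ) : EReal)) atTop (nhds (t : EReal)) := by
    refine (continuous_coe_real_ereal.tendsto _).comp ?_
    simpa using (tendsto_const_div_atTop_nhds_zero_nat B).const_add t
  rw [← hlim.limsup_eq]
  refine limsup_le_limsup ?_
  filter_upwards [eventually_gt_atTop 0] with k hk
  have hk' : (0 : ℝ) < k := Nat.cast_pos.2 hk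
  have hBk : a k - t * k ≤ B := hB (mem_range_self k)
  rw [← EReal.coe_div, EReal.coe_le_coe_iff, div_le_iff₀ hk', add_mul, div_mul_cancel₀ _ hk'.ne']
  linarith

theorem le_limsup_div_natCast_of_not_bddAbove {a : ℕ → ℝ} {t : ℝ}
    (h : ¬ BddAbove (range fun k : ℕ => a k - t * k)) :
    (t : EReal) ≤ limsup (fun k : ℕ => (a k : EReal) / ((k : ℝ) : EReal)) atTop := by
  by_contra! hlt
  have hev : ∀ᶠ k : ℕ in atTop, a k - t * k ≤ 0 := by
    filter_upwards [eventually_lt_of_limsup_lt hlt, eventually_gt_atTop 0] with k hk hk0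
    rw [← EReal.coe_div, EReal.coe_lt_coe_iff, div_lt_iff₀ (Nat.cast_pos.2 hk0)] at hk
    exact sub_nonpos.2 hk.le
  exact h (IsBoundedUnder.bddAbove_range ⟨0, eventually_map.2 hev⟩)

theorem iSup_coe_ereal_eq_top_iff {ι : Type*} (u : ι → ℝ) :
    ⨆ i, (u i : EReal) = ⊤ ↔ ¬ BddAbove (range u) := by
  rw [not_bddAbove_iff, EReal.eq_top_iff_forall_lt]
  simp only [lt_iSup_iff, EReal.coe_lt_coe_iff, exists_range_iff]

end Sequences

namespace MPGame

open Filter Set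

variable {V : Type*}

section Strategies

variable (G : MPGame V)

instance nonempty_edge (v : V) : Nonempty {u // G.E v u} :=
  nonempty_subtype.2 (G.sinkless v)

instance nonempty_legal : Nonempty {σ : V → V // G.Legal σ} :=
  nonempty_subtype.2 (Classical.skolem.1 G.sinkless)

theorem exists_legal_forall_of_forall_exists {C : V → Prop} {P : V → V → Prop}
    (h : ∀ v, C v → ∃ u, G.E v u ∧ P v u) : ∃ σ, G.Legal σ ∧ ∀ v, C v → P v (σ v) := by
  have hex (v : V) : ∃ u, G.E v u ∧ (C v → P v u) := by
    by_cases hv : C v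
    · exact (h v hv).imp fun u hu => ⟨hu.1, fun _ => hu.2⟩
    · exact (G.sinkless v).imp fun u hu => ⟨hu, fun hC => absurd hC hv⟩
  choose σ hσ using hex
  exact ⟨σ, fun v => (hσ v).1, fun v => (hσ v).2⟩

theorem exists_path_consMin_consMax {σ τ : V → V} (hσ : G.Legal σ) (hτ : G.Legal τ) (v : V) :
    ∃ π : G.Path, π.vert 0 = v ∧ π.ConsMin σ ∧ π.ConsMax τ := by
  classical
  let next (u : V) : V := if G.IsMin u then σ u else τ u
  have hnext (u : V) : G.E u (next u) := by
    by_cases hu : G.IsMin u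
    · simpa only [next, if_pos hu] using hσ u
    · simpa only [next, if_neg hu] using hτ u
  have hsucc (i : ℕ) : next^[i + 1] v = next (next^[i] v) := Function.iterate_succ_apply' ..
  exact ⟨⟨fun i => next^[i] v, fun i => hsucc i ▸ hnext _⟩, rfl,
    fun i hi => (hsucc i).trans (if_pos hi), fun i hi => (hsucc i).trans (if_neg hi)⟩

variable {G} {val : G.Path → EReal} {v : V}

theorem minVal_le {σ : V → V} (hσ : G.Legal σ) {c : EReal}
    (h : ∀ π : G.Path, π.vert 0 = v → π.ConsMin σ → val π ≤ c) : G.minVal val v ≤ c :=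
  iInf_le_of_le ⟨σ, hσ⟩ (iSup_le fun π => h π.1 π.2.1 π.2.2)

theorem le_maxVal {τ : V → V} (hτ : G.Legal τ) {c : EReal}
    (h : ∀ π : G.Path, π.vert 0 = v → π.ConsMax τ → c ≤ val π) : c ≤ G.maxVal val v :=
  le_iSup_of_le ⟨τ, hτ⟩ (le_iInf fun π => h π.1 π.2.1 π.2.2)

theorem maxVal_le_minVal (G : MPGame V) (val : G.Path → EReal) (v : V) :
    G.maxVal val v ≤ G.minVal val v := by
  refine iSup_le fun τ => le_iInf fun σ => ?_
  obtain ⟨π, h0, hσ, hτ⟩ := G.exists_path_consMin_consMax σ.2 τ.2 v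
  exact (iInf_le_of_le ⟨π, h0, hτ⟩ le_rfl).trans (le_iSup_of_le ⟨π, h0, hσ⟩ le_rfl)

theorem exists_legal_forall_le_minVal [Finite V] (val : G.Path → EReal) (v : V) :
    ∃ σ, G.Legal σ ∧ ∀ π : G.Path, π.vert 0 = v → π.ConsMin σ → val π ≤ G.minVal val v := by
  obtain ⟨⟨σ, hσ⟩, h⟩ := exists_eq_ciInf_of_finite (f := fun σ : {σ : V → V // G.Legal σ} =>
    ⨆ π : {π : G.Path // π.vert 0 = v ∧ π.ConsMin σ.1}, val π.1)
  exact ⟨σ, hσ, fun π h0 hπ => (le_iSup_of_le ⟨π, h0, hπ⟩ le_rfl).trans h.le⟩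

theorem exists_legal_forall_maxVal_le [Finite V] (val : G.Path → EReal) (v : V) :
    ∃ τ, G.Legal τ ∧ ∀ π : G.Path, π.vert 0 = v → π.ConsMax τ → G.maxVal val v ≤ val π := by
  obtain ⟨⟨τ, hτ⟩, h⟩ := exists_eq_ciSup_of_finite (f := fun τ : {τ : V → V // G.Legal τ} =>
    ⨅ π : {π : G.Path // π.vert 0 = v ∧ π.ConsMax τ.1}, val π.1)
  exact ⟨τ, hτ, fun π h0 hπ => h.ge.trans (iInf_le_of_le ⟨π, h0, hπ⟩ le_rfl)⟩

end Strategies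

section PartialSums

variable {G : MPGame V} (π : G.Path)

theorem Path.wsum_zero : π.wsum 0 = 0 := rfl

theorem Path.wsum_succ (k : ℕ) :
    π.wsum (k + 1) = π.wsum k + G.w (π.vert k) (π.vert (k + 1)) :=
  Finset.sum_range_succ _ _

theorem Path.le_wsum_add_of_forall_le {f : V → ℤ} {k : ℕ}
    (h : ∀ i < k, f (π.vert i) ≤ G.w (π.vert i) (π.vert (i + 1)) + f (π.vert (i + 1))) :
    f (π.vert 0) ≤ π.wsum k + f (π.vert k) := by
  induction k with
  | zero => rw [π.wsum_zero, zero_add]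
  | succ k ih =>
    have hk := h k k.lt_succ_self
    have ih := ih fun i hi => h i (hi.trans k.lt_succ_self)
    rw [π.wsum_succ]
    linarith

theorem wsum_le_supSigma {X : Set V} {k : ℕ} (hk : ∀ i < k, π.vert i ∉ X) :
    ((π.wsum k : ℝ) : EReal) ≤ supSigma X π :=
  le_iSup_of_le ⟨k, hk⟩ le_rfl

theorem supSigma_empty_eq_top_iff :
    supSigma ∅ π = ⊤ ↔ ¬ BddAbove (range fun k => (π.wsum k : ℝ)) := by
  have h : supSigma ∅ π = ⨆ k, ((π.wsum k : ℝ) : EReal) :=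
    le_antisymm (iSup_le fun k => le_iSup_of_le k.1 le_rfl)
      (iSup_le fun _ => wsum_le_supSigma π fun _ _ => notMem_empty _)
  rw [h, iSup_coe_ereal_eq_top_iff]

end PartialSums

section Progress

/-- The edge from `v` to `u` makes progress for Max with respect to a potential `f` and a rank `r`:
its potential-adjusted weight `w v u + f u - f v` is nonnegative, and if it is zero then the rank
drops. -/
def Progress {α : Type*} [LT α] (G : MPGame V) (f : V → ℤ) (r : V → α) (v u : V) : Prop :=
  f v ≤ G.w v u + f u ∧ (f v < G.w v u + f u ∨ r u < r v)

variable {G : MPGame V} {α : Type*} [Preorder α] [WellFoundedLT α] {f : V → ℤ} {r : V → α}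
  {π : G.Path}

theorem Path.not_bddAbove_range_wsum_of_progress (hf : BddAbove (range f))
    (h : ∀ k, G.Progress f r (π.vert k) (π.vert (k + 1))) : ¬ BddAbove (range π.wsum) := by
  intro hsum
  have hsucc (k : ℕ) := π.wsum_succ k
  have hmono : Monotone fun k => π.wsum k + f (π.vert k) :=
    monotone_nat_of_le_succ fun k => by linarith [(h k).1, hsucc k]
  refine not_bddAbove_range_of_lt_or_rank_lt (r := fun k => r (π.vert k)) hmono
    (fun k => (h k).2.imp_left fun hlt => by linarith [hsucc k]) ?_
  exact hsum.range_add (hf.mono (range_comp_subset_range π.vert f))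

theorem Path.exists_le_wsum_of_progress (hf : BddAbove (range f))
    (h : ∀ k, 0 < f (π.vert k) → G.Progress f r (π.vert k) (π.vert (k + 1))) :
    ∃ k, (∀ i < k, 0 < f (π.vert i)) ∧ f (π.vert 0) ≤ π.wsum k := by
  classical
  by_cases hpos : ∀ k, 0 < f (π.vert k)
  · obtain ⟨_, ⟨k, rfl⟩, hk⟩ := not_bddAbove_iff.1
      (Path.not_bddAbove_range_wsum_of_progress hf fun k => h k (hpos k)) (f (π.vert 0))
    exact ⟨k, fun i _ => hpos i, hk.le⟩
  · push Not at hpos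
    have hbefore (i : ℕ) (hi : i < Nat.find hpos) : 0 < f (π.vert i) :=
      not_le.1 (Nat.find_min hpos hi)
    have htel := π.le_wsum_add_of_forall_le fun i hi => (h i (hbefore i hi)).1
    exact ⟨Nat.find hpos, hbefore, by linarith [Nat.find_spec hpos]⟩

end Progress

section ValueIteration

open Classical in
/-- The one-step value operator: the player who owns `v` optimizes the weight of an outgoing edge
plus the value `f` of its endpoint. The infimum and the supremum are only meaningful when they are
bounded, for instance when `V` is finite. -/
noncomputable def bellman (G : MPGame V) (f : V → ℤ) (v : V) : ℤ :=
  if G.IsMin v then ⨅ u : {u // G.E v u}, (G.w v u + f u)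
  else ⨆ u : {u // G.E v u}, (G.w v u + f u)

/-- The value operator of the `supΣ^X`-game: the game stops in `X`, and the positive part accounts
for the empty partial sum. -/
noncomputable def supSigmaStep (G : MPGame V) (X : Set V) (f : V → ℤ) : V → ℤ :=
  Xᶜ.indicator (G.bellman f)⁺

/-- The value of the `supΣ^X`-game truncated after `N` steps. -/
noncomputable def supSigmaIter (G : MPGame V) (X : Set V) (N : ℕ) : V → ℤ :=
  (G.supSigmaStep X)^[N] 0

/-- The first stage of the value iteration at which the value of stage `N` is reached. -/
noncomputable def supSigmaRank (G : MPGame V) (X : Set V) (N : ℕ) (v : V) : ℕ :=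
  sInf {i | G.supSigmaIter X i v = G.supSigmaIter X N v}

variable (G : MPGame V) (X : Set V)

theorem supSigmaIter_zero : G.supSigmaIter X 0 = 0 := rfl

theorem supSigmaIter_succ (N : ℕ) :
    G.supSigmaIter X (N + 1) = Xᶜ.indicator (G.bellman (G.supSigmaIter X N))⁺ :=
  Function.iterate_succ_apply' ..

variable {G X} {N : ℕ} {v u : V}

theorem notMem_of_supSigmaIter_pos (h : 0 < G.supSigmaIter X N v) : v ∉ X := by
  intro hv
  cases N with
  | zero => exact h.false
  | succ N => simp [supSigmaIter_succ, hv] at h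

theorem bellman_le_supSigmaIter_succ (hv : v ∉ X) :
    G.bellman (G.supSigmaIter X N) v ≤ G.supSigmaIter X (N + 1) v := by
  rw [supSigmaIter_succ, indicator_of_mem (mem_compl hv)]
  exact le_posPart _

theorem supSigmaIter_succ_eq_bellman (h : 0 < G.supSigmaIter X (N + 1) v) :
    G.supSigmaIter X (N + 1) v = G.bellman (G.supSigmaIter X N) v := by
  have hv := notMem_of_supSigmaIter_pos h
  rw [supSigmaIter_succ, indicator_of_mem (mem_compl hv), Pi.posPart_apply] at h ⊢
  exact posPart_eq_of_posPart_pos h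

theorem supSigmaIter_supSigmaRank (G : MPGame V) (X : Set V) (N : ℕ) (v : V) :
    G.supSigmaIter X (G.supSigmaRank X N v) v = G.supSigmaIter X N v :=
  Nat.sInf_mem (s := {i | G.supSigmaIter X i v = G.supSigmaIter X N v}) ⟨N, rfl⟩

theorem supSigmaRank_le {i : ℕ} (h : G.supSigmaIter X i v = G.supSigmaIter X N v) :
    G.supSigmaRank X N v ≤ i :=
  Nat.sInf_le h

theorem exists_supSigmaRank_eq_succ (h : 0 < G.supSigmaIter X N v) :
    ∃ j, G.supSigmaRank X N v = j + 1 ∧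
      G.supSigmaIter X N v = G.bellman (G.supSigmaIter X j) v := by
  have hrank := G.supSigmaIter_supSigmaRank X N v
  cases hr : G.supSigmaRank X N v with
  | zero =>
    rw [hr, supSigmaIter_zero] at hrank
    exact absurd hrank h.ne
  | succ j =>
    rw [hr] at hrank
    exact ⟨j, rfl, hrank ▸ supSigmaIter_succ_eq_bellman (hrank ▸ h)⟩

variable [Finite V]

theorem exists_bellman_eq (G : MPGame V) (f : V → ℤ) (v : V) :
    ∃ u, G.E v u ∧ G.bellman f v = G.w v u + f u := by
  rw [bellman]
  split_ifs
  · obtain ⟨u, hu⟩ := exists_eq_ciInf_of_finite (f := fun u : {u // G.E v u} => G.w v u + f u)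
    exact ⟨u, u.2, hu.symm⟩
  · obtain ⟨u, hu⟩ := exists_eq_ciSup_of_finite (f := fun u : {u // G.E v u} => G.w v u + f u)
    exact ⟨u, u.2, hu.symm⟩

theorem bellman_le_of_isMin (hv : G.IsMin v) (hu : G.E v u) (f : V → ℤ) :
    G.bellman f v ≤ G.w v u + f u := by
  rw [bellman, if_pos hv]
  exact ciInf_le (f := fun u : {u // G.E v u} => G.w v u + f u)
    (finite_range _).bddBelow ⟨u, hu⟩

theorem le_bellman_of_not_isMin (hv : ¬ G.IsMin v) (hu : G.E v u) (f : V → ℤ) :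
    G.w v u + f u ≤ G.bellman f v := by
  rw [bellman, if_neg hv]
  exact le_ciSup (f := fun u : {u // G.E v u} => G.w v u + f u)
    (finite_range _).bddAbove ⟨u, hu⟩

theorem bellman_mono (G : MPGame V) : Monotone G.bellman := by
  intro f g hfg v
  by_cases hv : G.IsMin v
  · obtain ⟨u, hu, hg⟩ := G.exists_bellman_eq g v
    linarith [bellman_le_of_isMin hv hu f, hfg u]
  · obtain ⟨u, hu, hf⟩ := G.exists_bellman_eq f v
    linarith [le_bellman_of_not_isMin hv hu g, hfg u]

theorem supSigmaStep_mono (G : MPGame V) (X : Set V) : Monotone (G.supSigmaStep X) :=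
  fun _ _ hfg v => indicator_le_indicator (posPart_mono (G.bellman_mono hfg) v)

theorem supSigmaIter_mono (G : MPGame V) (X : Set V) : Monotone (G.supSigmaIter X) :=
  (G.supSigmaStep_mono X).monotone_iterate_of_le_map
    (indicator_nonneg fun v _ => posPart_nonneg (G.bellman 0) v)

theorem exists_forall_exists_add_supSigmaIter_le (hX : v ∉ X) :
    ∃ u, G.E v u ∧ ∀ N, ∃ M, G.w v u + G.supSigmaIter X N u ≤ G.supSigmaIter X M v := by
  have hstage (N : ℕ) :
      ∃ u, G.E v u ∧ G.w v u + G.supSigmaIter X N u ≤ G.supSigmaIter X (N + 1) v :=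
    (G.exists_bellman_eq (G.supSigmaIter X N) v).imp fun _ ⟨hu, hopt⟩ =>
      ⟨hu, hopt.ge.trans (bellman_le_supSigmaIter_succ hX)⟩
  obtain ⟨u, hu⟩ := frequently_exists.1 (Frequently.of_forall (f := atTop) hstage)
  obtain ⟨_, hE, -⟩ := hu.exists
  refine ⟨u, hE, fun N => ?_⟩
  obtain ⟨M, hNM, -, hM⟩ := frequently_atTop.1 hu N
  exact ⟨M + 1, by linarith [G.supSigmaIter_mono X hNM u]⟩

theorem exists_legal_forall_exists_wsum_le (G : MPGame V) (X : Set V) :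
    ∃ σ, G.Legal σ ∧ ∀ π : G.Path, π.ConsMin σ → ∀ k, (∀ i < k, π.vert i ∉ X) →
      ∃ M, π.wsum k ≤ G.supSigmaIter X M (π.vert 0) := by
  obtain ⟨σ, hσ, hstep⟩ := G.exists_legal_forall_of_forall_exists (C := (· ∉ X))
    fun _ => exists_forall_exists_add_supSigmaIter_le
  refine ⟨σ, hσ, fun π hπ k hk => ?_⟩
  have hedge (i : ℕ) (hi : π.vert i ∉ X) (N : ℕ) :
      ∃ M, G.w (π.vert i) (π.vert (i + 1)) + G.supSigmaIter X N (π.vert (i + 1)) ≤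
        G.supSigmaIter X M (π.vert i) := by
    by_cases hv : G.IsMin (π.vert i)
    · rw [hπ i hv]
      exact hstep _ hi N
    · exact ⟨N + 1, (le_bellman_of_not_isMin hv (π.adj i) _).trans
        (bellman_le_supSigmaIter_succ hi)⟩
  have hpotential : ∀ N, ∃ M, π.wsum k + G.supSigmaIter X N (π.vert k) ≤
      G.supSigmaIter X M (π.vert 0) := by
    induction k with
    | zero => exact fun N => ⟨N, by rw [π.wsum_zero, zero_add]⟩
    | succ k ih =>
      intro N
      obtain ⟨M, hM⟩ := hedge k (hk k k.lt_succ_self) N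
      obtain ⟨L, hL⟩ := ih (fun i hi => hk i (hi.trans k.lt_succ_self)) M
      exact ⟨L, by rw [π.wsum_succ]; linarith⟩
  simpa only [supSigmaIter_zero, Pi.zero_apply, add_zero] using hpotential 0

theorem progress_of_supSigmaIter_le {j : ℕ} (hj : j < G.supSigmaRank X N v)
    (h : G.supSigmaIter X N v ≤ G.w v u + G.supSigmaIter X j u) :
    G.Progress (G.supSigmaIter X N) (G.supSigmaRank X N) v u := by
  have hjN : j ≤ N := hj.le.trans (supSigmaRank_le rfl)
  rcases (G.supSigmaIter_mono X hjN u).eq_or_lt with heq | hlt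
  · exact ⟨heq ▸ h, .inr ((supSigmaRank_le heq).trans_lt hj)⟩
  · have hgain := h.trans_lt (add_lt_add_right hlt (G.w v u))
    exact ⟨hgain.le, .inl hgain⟩

theorem exists_legal_forall_exists_le_wsum (G : MPGame V) (X : Set V) (N : ℕ) :
    ∃ τ, G.Legal τ ∧ ∀ π : G.Path, π.ConsMax τ →
      ∃ k, (∀ i < k, π.vert i ∉ X) ∧ G.supSigmaIter X N (π.vert 0) ≤ π.wsum k := by
  have hbest (v : V) (hv : 0 < G.supSigmaIter X N v) :
      ∃ u, G.E v u ∧ G.Progress (G.supSigmaIter X N) (G.supSigmaRank X N) v u := by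
    obtain ⟨j, hj, hval⟩ := exists_supSigmaRank_eq_succ hv
    obtain ⟨u, hu, hopt⟩ := G.exists_bellman_eq (G.supSigmaIter X j) v
    exact ⟨u, hu, progress_of_supSigmaIter_le (j.lt_succ_self.trans_eq hj.symm)
      (hval.trans hopt).le⟩
  obtain ⟨τ, hτ, hstep⟩ := G.exists_legal_forall_of_forall_exists hbest
  refine ⟨τ, hτ, fun π hπ => ?_⟩
  have hprogress (k : ℕ) (hk : 0 < G.supSigmaIter X N (π.vert k)) :
      G.Progress (G.supSigmaIter X N) (G.supSigmaRank X N) (π.vert k) (π.vert (k + 1)) := by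
    by_cases hv : G.IsMin (π.vert k)
    · obtain ⟨j, hj, hval⟩ := exists_supSigmaRank_eq_succ hk
      exact progress_of_supSigmaIter_le (j.lt_succ_self.trans_eq hj.symm)
        (hval.trans_le (bellman_le_of_isMin hv (π.adj k) _))
    · exact hπ k hv ▸ hstep _ hk
  obtain ⟨k, hpos, hk⟩ :=
    Path.exists_le_wsum_of_progress (finite_range (G.supSigmaIter X N)).bddAbove hprogress
  exact ⟨k, fun i hi => notMem_of_supSigmaIter_pos (hpos i hi), hk⟩

end ValueIteration

section Duality

/-- The game with the two players exchanged and the weights negated; it exchanges `supΣ^X` and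
`-infΣ^X`. -/
def dual (G : MPGame V) : MPGame V where
  E := G.E
  w := fun u v => -G.w u v
  IsMin := fun v => ¬ G.IsMin v
  sinkless := G.sinkless

variable {G : MPGame V} (π : G.Path)

/-- A path of `G`, seen as a path of the dual game. -/
def Path.dual : G.dual.Path := ⟨π.vert, π.adj⟩

theorem Path.wsum_dual (k : ℕ) : π.dual.wsum k = -π.wsum k :=
  Finset.sum_neg_distrib _

theorem Path.supSigma_dual (X : Set V) : supSigma X π.dual = -infSigma X π := by
  simp only [supSigma, π.wsum_dual, Int.cast_neg, EReal.coe_neg]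
  exact (EReal.negOrderIso.map_iInf fun k : {k : ℕ // ∀ i < k, π.vert i ∉ X} =>
    ((π.wsum k.1 : ℝ) : EReal)).symm

end Duality

section MeanPayoff

/-- The game with weights `w - t`, multiplied by the denominator of `t` to keep them integral.
Mean payoffs above `t` in `G` correspond to positive mean payoffs in this game. -/
def atThreshold (G : MPGame V) (t : ℚ) : MPGame V where
  E := G.E
  w := fun u v => t.den * G.w u v - t.num
  IsMin := G.IsMin
  sinkless := G.sinkless

variable {G : MPGame V} (π : G.Path) {t : ℚ}

/-- A path of `G`, seen as a path of `G.atThreshold t`. -/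
def Path.atThreshold (t : ℚ) : (G.atThreshold t).Path := ⟨π.vert, π.adj⟩

theorem Path.wsum_atThreshold (t : ℚ) (k : ℕ) :
    ((π.atThreshold t).wsum k : ℝ) = t.den * (π.wsum k - t * k) := by
  have hsum : (π.atThreshold t).wsum k = t.den * π.wsum k - k * t.num := by
    simp [Path.wsum, Path.atThreshold, MPGame.atThreshold, Finset.mul_sum]
  have ht : (t : ℝ) * t.den = t.num := by exact_mod_cast t.mul_den_eq_num
  rw [hsum]
  push_cast
  rw [← ht]
  ring

theorem Path.supSigma_atThreshold_eq_top_iff :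
    supSigma ∅ (π.atThreshold t) = ⊤ ↔ ¬ BddAbove (range fun k : ℕ => (π.wsum k - t * k : ℝ)) := by
  have hden : (0 : ℝ) < t.den := Nat.cast_pos.2 t.pos
  have himage : (range fun k => ((π.atThreshold t).wsum k : ℝ)) =
      OrderIso.mulLeft₀ (t.den : ℝ) hden '' range fun k : ℕ => (π.wsum k - t * k : ℝ) := by
    rw [← range_comp]
    exact congrArg range (funext (π.wsum_atThreshold t))
  rw [supSigma_empty_eq_top_iff, himage, OrderIso.bddAbove_image]

theorem Path.MP_le_of_supSigma_atThreshold_ne_top (h : supSigma ∅ (π.atThreshold t) ≠ ⊤) :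
    MP π ≤ ((t : ℝ) : EReal) :=
  limsup_div_natCast_le_of_bddAbove (not_not.1 (mt π.supSigma_atThreshold_eq_top_iff.2 h))

theorem Path.le_MP_of_supSigma_atThreshold_eq_top (h : supSigma ∅ (π.atThreshold t) = ⊤) :
    ((t : ℝ) : EReal) ≤ MP π :=
  le_limsup_div_natCast_of_not_bddAbove (π.supSigma_atThreshold_eq_top_iff.1 h)

end MeanPayoff

section Determinacy

variable [Finite V] (G : MPGame V) (X : Set V) (v : V)

theorem minVal_supSigma_le_iSup :
    G.minVal (supSigma X) v ≤ ⨆ N, ((G.supSigmaIter X N v : ℝ) : EReal) := by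
  obtain ⟨σ, hσ, h⟩ := G.exists_legal_forall_exists_wsum_le X
  refine minVal_le hσ fun π h0 hπ => iSup_le fun ⟨k, hk⟩ => ?_
  obtain ⟨M, hM⟩ := h π hπ k hk
  rw [h0] at hM
  exact le_iSup_of_le M (by exact_mod_cast hM)

theorem iSup_le_maxVal_supSigma :
    ⨆ N, ((G.supSigmaIter X N v : ℝ) : EReal) ≤ G.maxVal (supSigma X) v := by
  refine iSup_le fun N => ?_
  obtain ⟨τ, hτ, h⟩ := G.exists_legal_forall_exists_le_wsum X N
  refine le_maxVal hτ fun π h0 hπ => ?_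
  obtain ⟨k, hX, hk⟩ := h π hπ
  rw [h0] at hk
  exact le_trans (by exact_mod_cast hk) (wsum_le_supSigma π hX)

theorem minVal_supSigma_eq_maxVal : G.minVal (supSigma X) v = G.maxVal (supSigma X) v :=
  le_antisymm ((G.minVal_supSigma_le_iSup X v).trans (G.iSup_le_maxVal_supSigma X v))
    (G.maxVal_le_minVal _ v)

theorem minVal_infSigma_eq_maxVal : G.minVal (infSigma X) v = G.maxVal (infSigma X) v := by
  obtain ⟨τ, hτ, hmin⟩ := exists_legal_forall_le_minVal (supSigma (G := G.dual) X) v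
  obtain ⟨σ, hσ, hmax⟩ := exists_legal_forall_maxVal_le (supSigma (G := G.dual) X) v
  rw [minVal_supSigma_eq_maxVal] at hmin
  have hle : G.minVal (infSigma X) v ≤ -G.dual.maxVal (supSigma X) v :=
    minVal_le (G := G) hσ fun π h0 hπ => by
      rw [EReal.le_neg, ← π.supSigma_dual]
      exact hmax π.dual h0 fun i hi => hπ i (not_not.1 hi)
  have hge : -G.dual.maxVal (supSigma X) v ≤ G.maxVal (infSigma X) v :=
    le_maxVal (G := G) hτ fun π h0 hπ => by
      rw [EReal.neg_le, ← π.supSigma_dual]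
      exact hmin π.dual h0 hπ
  exact le_antisymm (hle.trans hge) (G.maxVal_le_minVal _ v)

theorem minVal_MP_eq_maxVal : G.minVal MP v = G.maxVal MP v := by
  refine le_antisymm ?_ (G.maxVal_le_minVal _ v)
  by_contra! hlt
  obtain ⟨t, hmax, hmin⟩ := EReal.lt_iff_exists_rat_btwn.1 hlt
  obtain ⟨σ, hσ, hσπ⟩ := exists_legal_forall_le_minVal (supSigma (G := G.atThreshold t) ∅) v
  obtain ⟨τ, hτ, hτπ⟩ := exists_legal_forall_maxVal_le (supSigma (G := G.atThreshold t) ∅) v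
  by_cases htop : (G.atThreshold t).minVal (supSigma ∅) v = ⊤
  · rw [← minVal_supSigma_eq_maxVal, htop] at hτπ
    exact hmax.not_ge <| le_maxVal (G := G) hτ fun π h0 hπ =>
      π.le_MP_of_supSigma_atThreshold_eq_top (top_le_iff.1 (hτπ (π.atThreshold t) h0 hπ))
  · exact hmin.not_ge <| minVal_le (G := G) hσ fun π h0 hπ =>
      π.MP_le_of_supSigma_atThreshold_ne_top
        ((hσπ (π.atThreshold t) h0 hπ).trans_lt (lt_top_iff_ne_top.2 htop)).ne

end Determinacy

end MPGame

open MPGame in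
/-- positional determinacy: for any finite game `G`, any
subset `X` of vertices, any valuation `val ∈ {MP, supΣ^X, infΣ^X}` and any
vertex `v`, the inf over positional Min-strategies of the sup over consistent
paths from `v` equals the sup over positional Max-strategies of the inf over
consistent paths from `v`. -/
theorem statement0 {V : Type*} [Fintype V] (G : MPGame V) (X : Set V)
    (val : G.Path → EReal)
    (hval : val = MPGame.MP ∨ val = MPGame.supSigma X ∨ val = MPGame.infSigma X)
    (v : V) :
    G.minVal val v = G.maxVal val v := by
  rcases hval with rfl | rfl | rfl
  · exact G.minVal_MP_eq_maxVal v
  · exact G.minVal_supSigma_eq_maxVal X v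
  · exact G.minVal_infSigma_eq_maxVal X v
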